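/- Let α ∈ (0,1], c ∈ (0, 1/2] and n ≥ 1. Define two probability distributions on ℝ³: P₁ = ½·Lap_3((1/2, c n^{−1/3}, 0), α⁻¹) + ½·Lap_3((1/2, −c n^{−1/3}, 0), α⁻¹) and P₂ = ½·Lap_3((1/2, c n^{−1/3}, c n^{−1/3}), α⁻¹) + ½·Lap_3((1/2, −c n^{−1/3}, −c n^{−1/3}), α⁻¹). Then the total variation distance between the n-fold product measures satisfies ‖P₁^{⊗n} − P₂^{⊗n}‖_TV ≤ 11.1 · c^{3/2} · α^{3/2}. -/

import Mathlib

open MeasureTheory Real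
open scoped ENNReal

/-- The Laplace distribution on `ℝ` with mean `m` and scale parameter `b`. -/
noncomputable def Lap1' (m b : ℝ) : Measure ℝ :=
  volume.withDensity (fun x => ENNReal.ofReal ((2 * b)⁻¹ * Real.exp (-|x - m| / b)))

/-- The `d`-dimensional Laplace distribution with independent coordinates,
mean vector `m` and common scale `b`. -/
noncomputable def LapVec (d : ℕ) (m : Fin d → ℝ) (b : ℝ) : Measure (Fin d → ℝ) :=
  Measure.pi (fun i => Lap1' (m i) b)

/-- Total variation distance between two measures. -/
noncomputable def tvDist {Ω : Type*} [MeasurableSpace Ω] (P Q : Measure Ω) : ℝ :=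
  ⨆ S : {S : Set Ω // MeasurableSet S}, |(P S.1).toReal - (Q S.1).toReal|

/-! Over the signs of the common shift, the density ratio `dP₂/dP₁` is a posterior average of
`exp ((|y| - |y ∓ s|) / b)`, where `s = c n^{-1/3}` and `b = α⁻¹`. With `t = s / b` it always lies
within `2t` of `1`. Where `|y| ≥ s` the two exponents are `t` and `-t` and both posterior weights
are within `t / 2` of `1/2`, so the first-order terms nearly cancel and the ratio is within `2t²`
of `1`. Since the strip `|y| < s` has mass at most `t`, the `χ²` divergence is `O(t³)`, whereas
either source of smallness alone would give `O(t²)`. As `χ²` tensorizes and `n t³ = (cα)³`, the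
Cauchy–Schwarz bound of total variation by `χ²` gives the claim when `cα` is small; otherwise the
right-hand side exceeds `1`. -/

section TotalVariation

variable {Ω : Type*} [MeasurableSpace Ω] {P : Measure Ω} {r : Ω → ℝ}

theorem tvDist_le_one (P Q : Measure Ω) [IsProbabilityMeasure P] [IsProbabilityMeasure Q] :
    tvDist P Q ≤ 1 :=
  have : Nonempty {S : Set Ω // MeasurableSet S} := ⟨⟨∅, MeasurableSet.empty⟩⟩
  ciSup_le fun _ =>
    abs_sub_le_of_nonneg_of_le measureReal_nonneg measureReal_le_one measureReal_nonneg
      measureReal_le_one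

theorem toReal_withDensity_ofReal_apply (hr : Integrable r P) (hr0 : 0 ≤ᵐ[P] r) {S : Set Ω}
    (hS : MeasurableSet S) :
    (P.withDensity (fun x => ENNReal.ofReal (r x)) S).toReal = ∫ x in S, r x ∂P := by
  have hr0S : 0 ≤ᵐ[P.restrict S] r := ae_restrict_of_ae hr0
  rw [withDensity_apply _ hS, ← ofReal_integral_eq_lintegral_ofReal hr.restrict hr0S,
    ENNReal.toReal_ofReal (integral_nonneg_of_ae hr0S)]

theorem tvDist_withDensity_le_integral_abs [IsFiniteMeasure P] (hr : Integrable r P)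
    (hr0 : 0 ≤ᵐ[P] r) :
    tvDist P (P.withDensity fun x => ENNReal.ofReal (r x)) ≤ ∫ x, |r x - 1| ∂P := by
  have hr1 : Integrable (fun x => r x - 1) P := hr.sub (integrable_const 1)
  have : Nonempty {S : Set Ω // MeasurableSet S} := ⟨⟨∅, MeasurableSet.empty⟩⟩
  refine ciSup_le ?_
  rintro ⟨S, hS⟩
  have hP : (P S).toReal = ∫ _ in S, (1 : ℝ) ∂P := by simp [Measure.real]
  rw [toReal_withDensity_ofReal_apply hr hr0 hS, hP, abs_sub_comm,
    ← integral_sub hr.restrict (integrable_const 1)]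
  exact abs_integral_le_integral_abs.trans
    (setIntegral_le_integral hr1.abs (ae_of_all _ fun _ => abs_nonneg _))

theorem integral_le_sqrt_integral_sq [IsProbabilityMeasure P] (hr : MemLp r 2 P) :
    ∫ x, r x ∂P ≤ √(∫ x, r x ^ 2 ∂P) := by
  have hvar := ProbabilityTheory.variance_nonneg r P
  rw [ProbabilityTheory.variance_eq_sub hr] at hvar
  exact Real.le_sqrt_of_sq_le (sub_nonneg.1 hvar)

theorem integral_eq_one_of_withDensity (hr : Integrable r P) (hr0 : 0 ≤ᵐ[P] r)
    [IsProbabilityMeasure (P.withDensity fun x => ENNReal.ofReal (r x))] :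
    ∫ x, r x ∂P = 1 := by
  rw [← setIntegral_univ, ← toReal_withDensity_ofReal_apply hr hr0 MeasurableSet.univ,
    measure_univ, ENNReal.toReal_one]

theorem integral_sq_le_of_abs_le [IsProbabilityMeasure P] {f : Ω → ℝ} {N : Set Ω}
    (hN : MeasurableSet N) {ε δ : ℝ} (hε : ∀ x ∈ N, |f x| ≤ ε) (hδ : ∀ x ∉ N, |f x| ≤ δ) :
    ∫ x, f x ^ 2 ∂P ≤ P.real N * ε ^ 2 + δ ^ 2 := by
  have hind : Integrable (N.indicator fun _ => ε ^ 2) P := (integrable_const _).indicator hN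
  have hpointwise : ∀ x, f x ^ 2 ≤ N.indicator (fun _ => ε ^ 2) x + δ ^ 2 := fun x => by
    by_cases hx : x ∈ N
    · rw [Set.indicator_of_mem hx]
      have := sq_le_sq.2 ((hε x hx).trans (le_abs_self ε))
      linarith [sq_nonneg δ]
    · rw [Set.indicator_of_notMem hx, zero_add]
      exact sq_le_sq.2 ((hδ x hx).trans (le_abs_self δ))
  calc ∫ x, f x ^ 2 ∂P ≤ ∫ x, (N.indicator (fun _ => ε ^ 2) x + δ ^ 2) ∂P :=
        integral_mono_of_nonneg (ae_of_all _ fun _ => sq_nonneg _)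
          (hind.add (integrable_const _)) (ae_of_all _ hpointwise)
    _ = P.real N * ε ^ 2 + δ ^ 2 := by
        rw [integral_add hind (integrable_const _), integral_indicator_const _ hN]
        simp

/-- The `χ²` divergence from `P` of the measure with density `r` with respect to `P`. The argument
is the density and not the measure, so that no Radon–Nikodym derivative is chosen. -/
noncomputable def chiSqDiv (P : Measure Ω) (r : Ω → ℝ) : ℝ :=
  ∫ x, (r x - 1) ^ 2 ∂P

theorem tvDist_withDensity_le_sqrt_chiSqDiv [IsProbabilityMeasure P] (hr : MemLp r 2 P)
    (hr0 : 0 ≤ᵐ[P] r) :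
    tvDist P (P.withDensity fun x => ENNReal.ofReal (r x)) ≤ √(chiSqDiv P r) :=
  calc tvDist P (P.withDensity fun x => ENNReal.ofReal (r x))
      ≤ ∫ x, |r x - 1| ∂P := tvDist_withDensity_le_integral_abs (hr.integrable one_le_two) hr0
    _ ≤ √(∫ x, |r x - 1| ^ 2 ∂P) := integral_le_sqrt_integral_sq (hr.sub (memLp_const 1)).abs
    _ = √(chiSqDiv P r) := by simp only [sq_abs, chiSqDiv]

theorem one_add_chiSqDiv [IsProbabilityMeasure P] (hr : MemLp r 2 P) (hr1 : ∫ x, r x ∂P = 1) :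
    1 + chiSqDiv P r = ∫ x, r x ^ 2 ∂P := by
  have hint : Integrable r P := hr.integrable one_le_two
  have hexpand : ∀ x, (r x - 1) ^ 2 = r x ^ 2 - (2 * r x - 1) := fun x => by ring
  have hlinear : Integrable (fun x => 2 * r x - 1) P :=
    (hint.const_mul 2).sub (integrable_const 1)
  simp only [chiSqDiv, hexpand]
  rw [integral_sub hr.integrable_sq hlinear,
    integral_sub (hint.const_mul 2) (integrable_const 1), integral_const_mul, hr1]
  simp only [integral_const, probReal_univ, smul_eq_mul]
  ring

end TotalVariation

section Pi

variable {ι : Type*} [Fintype ι] {Ω : ι → Type*} [∀ i, MeasurableSpace (Ω i)]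

theorem pi_withDensity_ofReal (μ : ∀ i, Measure (Ω i)) [∀ i, SigmaFinite (μ i)]
    {f : ∀ i, Ω i → ℝ} (hf : ∀ i, Integrable (f i) (μ i)) (hf0 : ∀ i x, 0 ≤ f i x) :
    Measure.pi (fun i => (μ i).withDensity fun x => ENNReal.ofReal (f i x))
      = (Measure.pi μ).withDensity fun x => ENNReal.ofReal (∏ i, f i (x i)) := by
  refine Measure.pi_eq fun s hs => ?_
  rw [withDensity_apply _ (MeasurableSet.univ_pi hs), Measure.restrict_pi_pi,
    ← ofReal_integral_eq_lintegral_ofReal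
      (Integrable.fintype_prod_dep fun i => (hf i).restrict)
      (ae_of_all _ fun x => Finset.prod_nonneg fun i _ => hf0 i _),
    integral_fintype_prod_eq_prod,
    ENNReal.ofReal_prod_of_nonneg fun i _ => integral_nonneg (hf0 i)]
  refine Finset.prod_congr rfl fun i _ => ?_
  rw [withDensity_apply _ (hs i), ofReal_integral_eq_lintegral_ofReal (hf i).restrict
    (ae_of_all _ (hf0 i))]

variable {P : ∀ i, Measure (Ω i)} [∀ i, IsProbabilityMeasure (P i)] {r : ∀ i, Ω i → ℝ}

theorem memLp_two_fintype_prod (hr : ∀ i, MemLp (r i) 2 (P i)) :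
    MemLp (fun x : ∀ i, Ω i => ∏ i, r i (x i)) 2 (Measure.pi P) := by
  have hint := Integrable.fintype_prod_dep fun i => (hr i).integrable one_le_two
  rw [memLp_two_iff_integrable_sq hint.aestronglyMeasurable]
  simpa only [Finset.prod_pow] using Integrable.fintype_prod_dep fun i => (hr i).integrable_sq

theorem one_add_chiSqDiv_pi (hr : ∀ i, MemLp (r i) 2 (P i)) (hr1 : ∀ i, ∫ x, r i x ∂P i = 1) :
    1 + chiSqDiv (Measure.pi P) (fun x => ∏ i, r i (x i)) = ∏ i, (1 + chiSqDiv (P i) (r i)) := by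
  have hprod1 : ∫ x, ∏ i, r i (x i) ∂Measure.pi P = 1 := by
    rw [integral_fintype_prod_eq_prod, Finset.prod_eq_one fun i _ => hr1 i]
  rw [one_add_chiSqDiv (memLp_two_fintype_prod hr) hprod1]
  simp only [← Finset.prod_pow, one_add_chiSqDiv (hr _) (hr1 _)]
  exact integral_fintype_prod_eq_prod fun i x => r i x ^ 2

theorem tvDist_pi_withDensity_le (hr : ∀ i, MemLp (r i) 2 (P i)) (hr0 : ∀ i x, 0 ≤ r i x)
    (hr1 : ∀ i, ∫ x, r i x ∂P i = 1) :
    tvDist (Measure.pi P) (Measure.pi fun i => (P i).withDensity fun x => ENNReal.ofReal (r i x))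
      ≤ √(∏ i, (1 + chiSqDiv (P i) (r i)) - 1) := by
  rw [pi_withDensity_ofReal P (fun i => (hr i).integrable one_le_two) hr0,
    ← one_add_chiSqDiv_pi hr hr1, add_sub_cancel_left]
  exact tvDist_withDensity_le_sqrt_chiSqDiv (memLp_two_fintype_prod hr)
    (ae_of_all _ fun x => Finset.prod_nonneg fun i _ => hr0 i _)

end Pi

section Laplace

/-- The density of `Lap1' m b` with respect to Lebesgue measure. -/
noncomputable def laplacePDFReal (m b x : ℝ) : ℝ :=
  (2 * b)⁻¹ * exp (-|x - m| / b)

theorem measurable_laplacePDFReal (m b : ℝ) : Measurable (laplacePDFReal m b) := by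
  unfold laplacePDFReal; fun_prop

theorem laplacePDFReal_eq_mul_exp (m m' b x : ℝ) :
    laplacePDFReal m b x = laplacePDFReal m' b x * exp ((|x - m'| - |x - m|) / b) := by
  rw [laplacePDFReal, laplacePDFReal, mul_assoc, ← exp_add]
  ring_nf

variable {b : ℝ} {d : ℕ}

theorem laplacePDFReal_pos (hb : 0 < b) (m x : ℝ) : 0 < laplacePDFReal m b x := by
  unfold laplacePDFReal; positivity

theorem laplacePDFReal_le (hb : 0 < b) (m x : ℝ) : laplacePDFReal m b x ≤ (2 * b)⁻¹ :=
  mul_le_of_le_one_right (by positivity)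
    (exp_le_one_iff.2 (div_nonpos_of_nonpos_of_nonneg (neg_nonpos.2 (abs_nonneg _)) hb.le))

theorem integral_laplacePDFReal (hb : 0 < b) (m : ℝ) : ∫ x, laplacePDFReal m b x = 1 := by
  unfold laplacePDFReal
  calc ∫ x, (2 * b)⁻¹ * exp (-|x - m| / b)
      = (2 * b)⁻¹ * ∫ x, exp (-|x| / b) := by
        rw [integral_const_mul, integral_sub_right_eq_self (fun x => exp (-|x| / b)) m]
    _ = (2 * b)⁻¹ * (2 * ∫ x in Set.Ioi 0, exp (-b⁻¹ * x)) := by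
        rw [integral_comp_abs (f := fun x => exp (-x / b))]
        simp only [neg_mul, neg_div, inv_mul_eq_div]
    _ = 1 := by
        rw [integral_exp_mul_Ioi (neg_lt_zero.2 (inv_pos.2 hb)) 0, mul_zero, exp_zero]
        field_simp

theorem integrable_laplacePDFReal (hb : 0 < b) (m : ℝ) : Integrable (laplacePDFReal m b) :=
  Integrable.of_integral_ne_zero (by rw [integral_laplacePDFReal hb]; exact one_ne_zero)

theorem isProbabilityMeasure_Lap1' (hb : 0 < b) (m : ℝ) : IsProbabilityMeasure (Lap1' m b) := by
  refine ⟨?_⟩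
  change (volume.withDensity fun x => ENNReal.ofReal (laplacePDFReal m b x)) Set.univ = 1
  rw [withDensity_apply _ MeasurableSet.univ, Measure.restrict_univ,
    ← ofReal_integral_eq_lintegral_ofReal (integrable_laplacePDFReal hb m)
      (ae_of_all _ fun x => (laplacePDFReal_pos hb m x).le), integral_laplacePDFReal hb,
    ENNReal.ofReal_one]

theorem Lap1'_le_smul_volume (hb : 0 < b) (m : ℝ) :
    Lap1' m b ≤ ENNReal.ofReal (2 * b)⁻¹ • volume := by
  rw [← withDensity_const]
  exact withDensity_mono (ae_of_all _ fun x => ENNReal.ofReal_le_ofReal (laplacePDFReal_le hb m x))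

theorem isProbabilityMeasure_LapVec (hb : 0 < b) (m : Fin d → ℝ) :
    IsProbabilityMeasure (LapVec d m b) := by
  have := fun i => isProbabilityMeasure_Lap1' hb (m i)
  unfold LapVec
  infer_instance

theorem LapVec_eq_withDensity (hb : 0 < b) (m : Fin d → ℝ) :
    LapVec d m b
      = volume.withDensity fun x => ENNReal.ofReal (∏ i, laplacePDFReal (m i) b (x i)) :=
  pi_withDensity_ofReal _ (fun i => integrable_laplacePDFReal hb (m i))
    fun i x => (laplacePDFReal_pos hb (m i) x).le

theorem LapVec_abs_apply_lt_le (hb : 0 < b) (m : Fin d → ℝ) (j : Fin d) (s : ℝ) :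
    LapVec d m b {x | |x j| < s} ≤ ENNReal.ofReal (s / b) := by
  have := fun i => isProbabilityMeasure_Lap1' hb (m i)
  have hball : {x : Fin d → ℝ | |x j| < s} = Function.eval j ⁻¹' Set.Ioo (-s) s := by
    ext x; simp [abs_lt]
  calc LapVec d m b {x | |x j| < s} = Lap1' (m j) b (Set.Ioo (-s) s) := by
        rw [hball]
        exact (measurePreserving_eval (fun i => Lap1' (m i) b) j).measure_preimage
          measurableSet_Ioo.nullMeasurableSet
    _ ≤ ENNReal.ofReal (2 * b)⁻¹ * volume (Set.Ioo (-s) s) :=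
        Lap1'_le_smul_volume hb (m j) _
    _ = ENNReal.ofReal (s / b) := by
        rw [Real.volume_Ioo, ← ENNReal.ofReal_mul (by positivity)]
        congr 1
        field_simp
        ring

end Laplace

section LaplaceMixture

/-- The balanced mixture of the Laplace distributions on `ℝ^d` with mean vectors `m` and `m'` and
common scale `b`. -/
noncomputable def lapMixture {d : ℕ} (m m' : Fin d → ℝ) (b : ℝ) : Measure (Fin d → ℝ) :=
  (1 / 2 : ℝ≥0∞) • LapVec d m b + (1 / 2 : ℝ≥0∞) • LapVec d m' b

variable {b : ℝ} {d : ℕ}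

theorem isProbabilityMeasure_lapMixture (hb : 0 < b) (m m' : Fin d → ℝ) :
    IsProbabilityMeasure (lapMixture m m' b) := by
  have := isProbabilityMeasure_LapVec hb m
  have := isProbabilityMeasure_LapVec hb m'
  exact ⟨by simp [lapMixture, ENNReal.inv_two_add_inv_two]⟩

theorem lapMixture_eq_withDensity (hb : 0 < b) (m m' : Fin d → ℝ) :
    lapMixture m m' b = volume.withDensity fun x => ENNReal.ofReal
      ((∏ i, laplacePDFReal (m i) b (x i) + ∏ i, laplacePDFReal (m' i) b (x i)) / 2) := by
  have hmeas (m : Fin d → ℝ) :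
      Measurable fun x : Fin d → ℝ => ENNReal.ofReal (∏ i, laplacePDFReal (m i) b (x i)) :=
    (Finset.measurable_fun_prod _ fun i _ =>
      (measurable_laplacePDFReal (m i) b).comp (measurable_pi_apply i)).ennreal_ofReal
  have hnonneg (m x : Fin d → ℝ) : 0 ≤ ∏ i, laplacePDFReal (m i) b (x i) :=
    Finset.prod_nonneg fun i _ => (laplacePDFReal_pos hb _ _).le
  rw [lapMixture, LapVec_eq_withDensity hb, LapVec_eq_withDensity hb, ← smul_add,
    ← withDensity_add_left (hmeas m), ← withDensity_smul _ ((hmeas m).add (hmeas m'))]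
  congr 1 with x
  simp only [Pi.smul_apply, Pi.add_apply, smul_eq_mul]
  rw [← ENNReal.ofReal_add (hnonneg m x) (hnonneg m' x), div_eq_inv_mul _ (2 : ℝ),
    ENNReal.ofReal_mul (by norm_num), ENNReal.ofReal_inv_of_pos (by norm_num)]
  simp

theorem lapMixture_real_abs_apply_lt_le (hb : 0 < b) (m m' : Fin d → ℝ) (j : Fin d) {s : ℝ}
    (hs : 0 ≤ s) : (lapMixture m m' b).real {x | |x j| < s} ≤ s / b := by
  refine ENNReal.toReal_le_of_le_ofReal (by positivity) ?_
  calc lapMixture m m' b {x | |x j| < s}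
      = 1 / 2 * LapVec d m b {x | |x j| < s} + 1 / 2 * LapVec d m' b {x | |x j| < s} := by
        simp [lapMixture]
    _ ≤ 1 / 2 * ENNReal.ofReal (s / b) + 1 / 2 * ENNReal.ofReal (s / b) := by
        gcongr <;> exact LapVec_abs_apply_lt_le hb _ j s
    _ = ENNReal.ofReal (s / b) := by rw [← add_mul, ENNReal.add_halves, one_mul]

end LaplaceMixture

section ExpAverage

variable {w t : ℝ}

theorem abs_average_exp_sub_one_le {p q : ℝ} (hw : w ∈ Set.Icc 0 1) (ht : t ≤ 1) (hp : |p| ≤ t)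
    (hq : |q| ≤ t) : |w * exp p + (1 - w) * exp q - 1| ≤ 2 * t := by
  have hw' : 0 ≤ 1 - w := sub_nonneg.2 hw.2
  have hexp {z : ℝ} (hz : |z| ≤ t) : |exp z - 1| ≤ 2 * t :=
    (Real.abs_exp_sub_one_le (hz.trans ht)).trans (by linarith)
  calc |w * exp p + (1 - w) * exp q - 1|
      = |w * (exp p - 1) + (1 - w) * (exp q - 1)| := by ring_nf
    _ ≤ w * |exp p - 1| + (1 - w) * |exp q - 1| := by
        refine (abs_add_le _ _).trans_eq ?_
        rw [abs_mul, abs_mul, abs_of_nonneg hw.1, abs_of_nonneg hw']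
    _ ≤ w * (2 * t) + (1 - w) * (2 * t) :=
        add_le_add (mul_le_mul_of_nonneg_left (hexp hp) hw.1)
          (mul_le_mul_of_nonneg_left (hexp hq) hw')
    _ = 2 * t := by ring

theorem abs_average_exp_neg_sub_one_le (hw : w ∈ Set.Icc 0 1) (ht : |t| ≤ 1) :
    |w * exp t + (1 - w) * exp (-t) - 1| ≤ |2 * w - 1| * |t| + t ^ 2 := by
  have hw' : 0 ≤ 1 - w := sub_nonneg.2 hw.2
  have hpos : |exp t - 1 - t| ≤ t ^ 2 := Real.abs_exp_sub_one_sub_id_le ht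
  have hneg : |exp (-t) - 1 - -t| ≤ t ^ 2 := by
    simpa using Real.abs_exp_sub_one_sub_id_le ((abs_neg t).trans_le ht)
  calc |w * exp t + (1 - w) * exp (-t) - 1|
      = |(2 * w - 1) * t + (w * (exp t - 1 - t) + (1 - w) * (exp (-t) - 1 - -t))| := by ring_nf
    _ ≤ |2 * w - 1| * |t| + (w * |exp t - 1 - t| + (1 - w) * |exp (-t) - 1 - -t|) := by
        refine (abs_add_le _ _).trans (add_le_add (abs_mul _ _).le
          ((abs_add_le _ _).trans_eq ?_))
        rw [abs_mul, abs_mul, abs_of_nonneg hw.1, abs_of_nonneg hw']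
    _ ≤ |2 * w - 1| * |t| + (w * t ^ 2 + (1 - w) * t ^ 2) := by
        have := hw.1
        gcongr
    _ = |2 * w - 1| * |t| + t ^ 2 := by ring

theorem lipschitzWith_sigmoid : LipschitzWith (1 / 4) sigmoid := by
  refine lipschitzWith_of_nnnorm_deriv_le differentiable_sigmoid fun x => ?_
  rw [← NNReal.coe_le_coe, coe_nnnorm, deriv_sigmoid, Real.norm_of_nonneg
    (mul_nonneg (sigmoid_nonneg x) (sub_nonneg.2 (sigmoid_le_one x)))]
  push_cast
  linarith [sq_nonneg (2 * sigmoid x - 1)]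

theorem abs_two_mul_sigmoid_sub_one_le (u : ℝ) : |2 * sigmoid u - 1| ≤ |u| / 2 := by
  have hlip := lipschitzWith_sigmoid.dist_le_mul u 0
  rw [Real.dist_eq, Real.dist_eq, sigmoid_zero, sub_zero] at hlip
  calc |2 * sigmoid u - 1| = 2 * |sigmoid u - 2⁻¹| := by
        rw [← abs_two, ← abs_mul, abs_two]
        ring_nf
    _ ≤ 2 * (1 / 4 * |u|) := by gcongr; simpa using hlip
    _ = |u| / 2 := by ring

end ExpAverage

section MixtureRatio

/-- The posterior probability of the shift `s`, given the observation `x` and a uniform prior on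
the two shifts `s` and `-s` of a Laplace variable of scale `b`. -/
noncomputable def posteriorWeight (s b x : ℝ) : ℝ :=
  sigmoid ((|x + s| - |x - s|) / b)

/-- The density ratio `dP₂/dP₁` of the two mixtures, where `x` and `y` are the second and third
coordinates; the first coordinate, which is independent of the others under both mixtures, drops
out. -/
noncomputable def mixtureRatio (s b x y : ℝ) : ℝ :=
  posteriorWeight s b x * exp ((|y| - |y - s|) / b)
    + (1 - posteriorWeight s b x) * exp ((|y| - |y + s|) / b)

theorem posteriorWeight_mem_Icc (s b x : ℝ) : posteriorWeight s b x ∈ Set.Icc 0 1 :=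
  ⟨sigmoid_nonneg _, sigmoid_le_one _⟩

theorem laplacePDFReal_eq_posteriorWeight_mul (s b x : ℝ) :
    laplacePDFReal s b x
      = posteriorWeight s b x * (laplacePDFReal s b x + laplacePDFReal (-s) b x) := by
  have hneg : laplacePDFReal (-s) b x
      = laplacePDFReal s b x * exp (-((|x + s| - |x - s|) / b)) := by
    rw [laplacePDFReal_eq_mul_exp (-s) s, sub_neg_eq_add, ← neg_div, neg_sub]
  rw [hneg, posteriorWeight, sigmoid_def]
  field_simp

theorem laplacePDFReal_mul_add_eq_mul_mixtureRatio (s b x y : ℝ) :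
    laplacePDFReal s b x * laplacePDFReal s b y + laplacePDFReal (-s) b x * laplacePDFReal (-s) b y
      = (laplacePDFReal s b x + laplacePDFReal (-s) b x) * laplacePDFReal 0 b y
        * mixtureRatio s b x y := by
  have hw := laplacePDFReal_eq_posteriorWeight_mul s b x
  rw [laplacePDFReal_eq_mul_exp s 0 b y, laplacePDFReal_eq_mul_exp (-s) 0 b y, mixtureRatio,
    sub_zero, sub_neg_eq_add]
  linear_combination laplacePDFReal 0 b y
    * (exp ((|y| - |y - s|) / b) - exp ((|y| - |y + s|) / b)) * hw

theorem mixtureRatio_nonneg (s b x y : ℝ) : 0 ≤ mixtureRatio s b x y :=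
  have hw := posteriorWeight_mem_Icc s b x
  add_nonneg (mul_nonneg hw.1 (exp_pos _).le) (mul_nonneg (sub_nonneg.2 hw.2) (exp_pos _).le)

variable {b : ℝ}

theorem measurable_mixtureRatio (s b : ℝ) {d : ℕ} (i j : Fin d) :
    Measurable fun x : Fin d → ℝ => mixtureRatio s b (x i) (x j) := by
  have := continuous_sigmoid.measurable
  unfold mixtureRatio posteriorWeight
  fun_prop

theorem lapMixture_correlated_eq_withDensity (hb : 0 < b) (m s : ℝ) :
    lapMixture ![m, s, s] ![m, -s, -s] b
      = (lapMixture ![m, s, 0] ![m, -s, 0] b).withDensity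
        fun x => ENNReal.ofReal (mixtureRatio s b (x 1) (x 2)) := by
  rw [lapMixture_eq_withDensity hb, lapMixture_eq_withDensity hb, ← withDensity_mul]
  · congr 1 with x
    simp only [Pi.mul_apply, Fin.prod_univ_three, Matrix.cons_val_zero, Matrix.cons_val_one,
      Matrix.cons_val]
    rw [← ENNReal.ofReal_mul' (mixtureRatio_nonneg _ _ _ _)]
    congr 1
    linear_combination laplacePDFReal m b (x 0) / 2
      * laplacePDFReal_mul_add_eq_mul_mixtureRatio s b (x 1) (x 2)
  · unfold laplacePDFReal; fun_prop
  · exact (measurable_mixtureRatio s b 1 2).ennreal_ofReal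

variable {s : ℝ}

theorem abs_mixtureRatio_sub_one_le (hb : 0 < b) (hs : 0 ≤ s) (hsb : s / b ≤ 1) (x y : ℝ) :
    |mixtureRatio s b x y - 1| ≤ 2 * (s / b) := by
  have hexponent {z : ℝ} (hz : |y - z| = s) : |(|y| - |z|) / b| ≤ s / b := by
    rw [abs_div, abs_of_pos hb, ← hz]
    exact div_le_div_of_nonneg_right (abs_abs_sub_abs_le y z) hb.le
  exact abs_average_exp_sub_one_le (posteriorWeight_mem_Icc s b x) hsb
    (hexponent (by rw [sub_sub_cancel, abs_of_nonneg hs]))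
    (hexponent (by rw [sub_add_cancel_left, abs_neg, abs_of_nonneg hs]))

theorem abs_two_mul_posteriorWeight_sub_one_le (hb : 0 < b) (hs : 0 ≤ s) (x : ℝ) :
    |2 * posteriorWeight s b x - 1| ≤ s / b := by
  have hdiff : |(|x + s| - |x - s|)| ≤ 2 * s := by
    calc |(|x + s| - |x - s|)| ≤ |x + s - (x - s)| := abs_abs_sub_abs_le _ _
      _ = 2 * s := by rw [add_sub_sub_cancel, ← two_mul, abs_of_nonneg (by positivity)]
  calc |2 * posteriorWeight s b x - 1| ≤ |(|x + s| - |x - s|) / b| / 2 :=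
        abs_two_mul_sigmoid_sub_one_le _
    _ ≤ 2 * s / b / 2 := by rw [abs_div, abs_of_pos hb]; gcongr
    _ = s / b := by ring

theorem abs_mixtureRatio_sub_one_le_of_le_abs (hb : 0 < b) (hs : 0 ≤ s) (hsb : s / b ≤ 1) (x : ℝ)
    {y : ℝ} (hy : s ≤ |y|) : |mixtureRatio s b x y - 1| ≤ 2 * (s / b) ^ 2 := by
  have hexponents : ∃ τ, |τ| = s / b ∧ (|y| - |y - s|) / b = τ ∧ (|y| - |y + s|) / b = -τ := by
    have ht : 0 ≤ s / b := by positivity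
    rcases le_abs'.1 hy with hy | hy
    · refine ⟨-(s / b), by rw [abs_neg, abs_of_nonneg ht], ?_, ?_⟩
      · rw [abs_of_nonpos (by linarith), abs_of_nonpos (by linarith)]; ring
      · rw [abs_of_nonpos (by linarith), abs_of_nonpos (by linarith)]; ring
    · refine ⟨s / b, abs_of_nonneg ht, ?_, ?_⟩
      · rw [abs_of_nonneg (by linarith), abs_of_nonneg (by linarith)]; ring
      · rw [abs_of_nonneg (by linarith), abs_of_nonneg (by linarith)]; ring
  obtain ⟨τ, hτ, hplus, hminus⟩ := hexponents
  calc |mixtureRatio s b x y - 1|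
      ≤ |2 * posteriorWeight s b x - 1| * |τ| + τ ^ 2 := by
        rw [mixtureRatio, hplus, hminus]
        exact abs_average_exp_neg_sub_one_le (posteriorWeight_mem_Icc s b x) (hτ.trans_le hsb)
    _ ≤ s / b * (s / b) + (s / b) ^ 2 := by
        rw [← sq_abs τ, hτ]
        gcongr
        exact abs_two_mul_posteriorWeight_sub_one_le hb hs x
    _ = 2 * (s / b) ^ 2 := by ring

theorem chiSqDiv_mixtureRatio_le (hb : 0 < b) (hs : 0 ≤ s) (hsb : s / b ≤ 1) (m : ℝ) :
    chiSqDiv (lapMixture ![m, s, 0] ![m, -s, 0] b) (fun x => mixtureRatio s b (x 1) (x 2))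
      ≤ 8 * (s / b) ^ 3 := by
  have := isProbabilityMeasure_lapMixture hb ![m, s, 0] ![m, -s, 0]
  have hstrip := lapMixture_real_abs_apply_lt_le hb ![m, s, 0] ![m, -s, 0] 2 hs
  have hstripMeas : MeasurableSet {x : Fin 3 → ℝ | |x 2| < s} :=
    measurableSet_lt (by fun_prop) measurable_const
  calc _ ≤ (lapMixture ![m, s, 0] ![m, -s, 0] b).real {x | |x 2| < s} * (2 * (s / b)) ^ 2
          + (2 * (s / b) ^ 2) ^ 2 :=
        integral_sq_le_of_abs_le hstripMeas
          (fun x _ => abs_mixtureRatio_sub_one_le hb hs hsb (x 1) (x 2))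
          fun x hx => abs_mixtureRatio_sub_one_le_of_le_abs hb hs hsb (x 1) (not_lt.1 hx)
    _ ≤ s / b * (2 * (s / b)) ^ 2 + (2 * (s / b) ^ 2) ^ 2 := by gcongr
    _ = 4 * (s / b) ^ 3 * (1 + s / b) := by ring
    _ ≤ 4 * (s / b) ^ 3 * (1 + 1) := by gcongr
    _ = 8 * (s / b) ^ 3 := by ring

end MixtureRatio

section Product

variable {b s : ℝ} {n : ℕ}

theorem tvDist_pi_lapMixture_le_sqrt_pow (hb : 0 < b) (hs : 0 ≤ s) (hsb : s / b ≤ 1) (m : ℝ)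
    (n : ℕ) :
    tvDist (Measure.pi fun _ : Fin n => lapMixture ![m, s, 0] ![m, -s, 0] b)
        (Measure.pi fun _ : Fin n => lapMixture ![m, s, s] ![m, -s, -s] b)
      ≤ √((1 + 8 * (s / b) ^ 3) ^ n - 1) := by
  have := isProbabilityMeasure_lapMixture hb ![m, s, 0] ![m, -s, 0]
  have hprob := isProbabilityMeasure_lapMixture hb ![m, s, s] ![m, -s, -s]
  have hchi := chiSqDiv_mixtureRatio_le hb hs hsb m
  rw [lapMixture_correlated_eq_withDensity hb] at hprob ⊢
  set P := lapMixture ![m, s, 0] ![m, -s, 0] b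
  set r : (Fin 3 → ℝ) → ℝ := fun x => mixtureRatio s b (x 1) (x 2)
  have hr0 : ∀ x, 0 ≤ r x := fun x => mixtureRatio_nonneg s b (x 1) (x 2)
  have hrLp : MemLp r 2 P := by
    refine MemLp.of_bound (measurable_mixtureRatio s b 1 2).aestronglyMeasurable 3
      (ae_of_all _ fun x => ?_)
    rw [Real.norm_of_nonneg (hr0 x)]
    linarith [(abs_le.1 (abs_mixtureRatio_sub_one_le hb hs hsb (x 1) (x 2))).2]
  have hr1 : ∫ x, r x ∂P = 1 :=
    integral_eq_one_of_withDensity (hrLp.integrable one_le_two) (ae_of_all _ hr0)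
  have hchi0 : 0 ≤ chiSqDiv P r := integral_nonneg fun _ => sq_nonneg _
  calc _ ≤ √(∏ _ : Fin n, (1 + chiSqDiv P r) - 1) :=
        tvDist_pi_withDensity_le (fun _ => hrLp) (fun _ => hr0) fun _ => hr1
    _ = √((1 + chiSqDiv P r) ^ n - 1) := by rw [Finset.prod_const, Finset.card_fin]
    _ ≤ √((1 + 8 * (s / b) ^ 3) ^ n - 1) := by gcongr

theorem sqrt_one_add_pow_sub_one_le {y : ℝ} (hy : 0 ≤ y) (hny : n * y ≤ 1 / 16) :
    √((1 + 8 * y) ^ n - 1) ≤ 4 * √(n * y) := by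
  set u := n * (8 * y)
  have hu0 : 0 ≤ u := by positivity
  have hu : u ≤ 1 / 2 := by linarith [show u = 8 * (n * y) by ring]
  have hexp : (1 + 8 * y) ^ n ≤ exp u := by
    rw [exp_nat_mul]
    gcongr
    linarith [add_one_le_exp (8 * y)]
  have hquad : exp u - 1 - u ≤ u ^ 2 :=
    (le_abs_self _).trans (Real.abs_exp_sub_one_sub_id_le
      ((abs_of_nonneg hu0).trans_le (hu.trans one_half_lt_one.le)))
  rw [Real.sqrt_le_left (by positivity), mul_pow, Real.sq_sqrt (by positivity)]
  nlinarith [show u = 8 * (n * y) by ring]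

theorem tvDist_pi_lapMixture_le (hb : 0 < b) (hs : 0 ≤ s) (m : ℝ) (hn : 1 ≤ n) :
    tvDist (Measure.pi fun _ : Fin n => lapMixture ![m, s, 0] ![m, -s, 0] b)
        (Measure.pi fun _ : Fin n => lapMixture ![m, s, s] ![m, -s, -s] b)
      ≤ 4 * √(n * (s / b) ^ 3) := by
  have := isProbabilityMeasure_lapMixture hb ![m, s, 0] ![m, -s, 0]
  have := isProbabilityMeasure_lapMixture hb ![m, s, s] ![m, -s, -s]
  have ht : 0 ≤ s / b := by positivity
  rcases le_total ((1 / 4) ^ 2) (n * (s / b) ^ 3) with hlarge | hsmall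
  · have := Real.le_sqrt_of_sq_le hlarge
    exact (tvDist_le_one _ _).trans (by linarith)
  · have hcube : (s / b) ^ 3 ≤ 1 := by
      have : (s / b) ^ 3 ≤ n * (s / b) ^ 3 :=
        le_mul_of_one_le_left (by positivity) (by exact_mod_cast hn)
      linarith
    have hsb : s / b ≤ 1 := (pow_le_one_iff_of_nonneg ht three_ne_zero).1 hcube
    exact (tvDist_pi_lapMixture_le_sqrt_pow hb hs hsb m n).trans
      (sqrt_one_add_pow_sub_one_le (by positivity) (by linarith))

theorem tv_product_laplace_mixtures_le_general {α c : ℝ} (m : ℝ) (hα : 0 < α) (hc : 0 ≤ c)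
    (hn : 1 ≤ n) :
    tvDist
      (Measure.pi fun _ : Fin n => lapMixture ![m, c * (n : ℝ) ^ (-(1 / 3) : ℝ), 0]
        ![m, -(c * (n : ℝ) ^ (-(1 / 3) : ℝ)), 0] α⁻¹)
      (Measure.pi fun _ : Fin n =>
        lapMixture ![m, c * (n : ℝ) ^ (-(1 / 3) : ℝ), c * (n : ℝ) ^ (-(1 / 3) : ℝ)]
          ![m, -(c * (n : ℝ) ^ (-(1 / 3) : ℝ)), -(c * (n : ℝ) ^ (-(1 / 3) : ℝ))] α⁻¹)
      ≤ 4 * c ^ ((3 : ℝ) / 2) * α ^ ((3 : ℝ) / 2) := by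
  have hn0 : (0 : ℝ) < n := by exact_mod_cast hn
  have hroot : ((n : ℝ) ^ (-(1 / 3) : ℝ)) ^ 3 = (n : ℝ)⁻¹ := by
    rw [← Real.rpow_mul_natCast hn0.le, ← Real.rpow_neg_one]
    norm_num
  have hscale : n * (c * (n : ℝ) ^ (-(1 / 3) : ℝ) / α⁻¹) ^ 3 = (c * α) ^ 3 := by
    rw [div_inv_eq_mul, mul_pow, mul_pow, hroot, mul_pow]
    field_simp
  have hsqrt : √((c * α) ^ 3) = c ^ ((3 : ℝ) / 2) * α ^ ((3 : ℝ) / 2) := by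
    rw [← Real.mul_rpow hc hα.le, Real.sqrt_eq_rpow, ← Real.rpow_natCast_mul (by positivity)]
    norm_num
  rw [mul_assoc, ← hsqrt, ← hscale]
  exact tvDist_pi_lapMixture_le (inv_pos.2 hα) (by positivity) m hn

end Product

/-- the total variation distance between the `n`-fold products of the
two Laplace-perturbed mixtures
`P₁ = ½ Lap₃((1/2, cn^{-1/3}, 0), α⁻¹) + ½ Lap₃((1/2, −cn^{-1/3}, 0), α⁻¹)` and
`P₂ = ½ Lap₃((1/2, cn^{-1/3}, cn^{-1/3}), α⁻¹) + ½ Lap₃((1/2, −cn^{-1/3}, −cn^{-1/3}), α⁻¹)`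
is at most `11.1 c^{3/2} α^{3/2}`. -/
theorem tv_product_laplace_mixtures_le (α c : ℝ) (hα : α ∈ Set.Ioc (0 : ℝ) 1)
    (hc : c ∈ Set.Ioc (0 : ℝ) (1 / 2)) (n : ℕ) (hn : 1 ≤ n) :
    tvDist
      (Measure.pi (fun _ : Fin n =>
        (1 / 2 : ℝ≥0∞) • LapVec 3 ![1 / 2, c * (n : ℝ) ^ (-(1 / 3) : ℝ), 0] α⁻¹
          + (1 / 2 : ℝ≥0∞) • LapVec 3 ![1 / 2, -(c * (n : ℝ) ^ (-(1 / 3) : ℝ)), 0] α⁻¹))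
      (Measure.pi (fun _ : Fin n =>
        (1 / 2 : ℝ≥0∞) • LapVec 3
              ![1 / 2, c * (n : ℝ) ^ (-(1 / 3) : ℝ), c * (n : ℝ) ^ (-(1 / 3) : ℝ)] α⁻¹
          + (1 / 2 : ℝ≥0∞) • LapVec 3
              ![1 / 2, -(c * (n : ℝ) ^ (-(1 / 3) : ℝ)), -(c * (n : ℝ) ^ (-(1 / 3) : ℝ))] α⁻¹))
      ≤ 11.1 * c ^ ((3 : ℝ) / 2) * α ^ ((3 : ℝ) / 2) := by
  have hα0 := hα.1
  have hc0 := hc.1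
  exact (tv_product_laplace_mixtures_le_general (1 / 2) hα0 hc0.le hn).trans (by gcongr; norm_num)
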